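/- Let m, n ≥ 1 be integers and let N_n denote the set of normal n×n complex matrices (matrices X with X X* = X* X), topologized as a subspace of M_n. There exists a continuous spectrum-shrinking map φ : N_n → M_m if and only if n divides m; and when n divides m, every continuous spectrum-shrinking map φ : N_n → M_m satisfies k_{φ(X)} = (k_X)^{m/n} for all X ∈ N_n (in particular, sp(φ(X)) = sp(X) for all X). -/

import Mathlib

open Matrix

/-!
Along a continuous family of matrices whose spectrum lies in a set of distinct points moving
continuously, the algebraic multiplicity of each point is locally constant. Apply this to
`φ (U * diagonal a * Uᴴ)` for a continuous spectrum-shrinking map `φ` and distinct eigenvalues `a`: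
the multiplicity of `a i` does not change when `a` moves among injective configurations, which form
a connected set, nor when `U` moves along a path of unitaries. Motion of the first kind can exchange
`a i` and `a j`, carrying their multiplicities along. Motion of the second kind undoes the exchange
without touching the multiplicities, since the permutation matrix of a transposition is a
self-adjoint unitary and so is joined to `1`. Hence all multiplicities are equal, and the
characteristic polynomial of `φ X` is a power of that of `X` whenever `X` has simple spectrum. The
exponent is forced by degrees, and such `X` are dense.
-/

section Polynomials

open Polynomial

variable {R ι : Type*} [CommRing R] [IsDomain R] [Fintype ι]

theorem rootMultiplicity_prod_X_sub_C_pow {a : ι → R} (ha : Function.Injective a) (d : ι → ℕ)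
    (i : ι) : (∏ j, (X - C (a j)) ^ d j).rootMultiplicity (a i) = d i := by
  classical
  have hne : ∏ j, (X - C (a j)) ^ d j ≠ 0 :=
    Finset.prod_ne_zero_iff.2 fun j _ => pow_ne_zero _ (X_sub_C_ne_zero _)
  rw [← count_roots, roots_prod _ _ hne, Multiset.count_bind]
  simp [roots_pow, Multiset.count_singleton, ha.eq_iff, Finset.sum_map_val]

theorem prod_X_sub_C_pow_rootMultiplicity {p : R[X]} (hp : p.Monic) (hs : p.Splits) {a : ι → R}
    (ha : Function.Injective a) (hroots : ∀ x, p.IsRoot x → x ∈ Set.range a) :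
    ∏ i, (X - C (a i)) ^ p.rootMultiplicity (a i) = p := by
  classical
  have hsub : p.roots.toFinset ⊆ Finset.univ.image a := fun x hx => by
    obtain ⟨i, rfl⟩ := hroots x (isRoot_of_mem_roots (Multiset.mem_toFinset.1 hx))
    exact Finset.mem_image_of_mem a (Finset.mem_univ i)
  calc ∏ i, (X - C (a i)) ^ p.rootMultiplicity (a i)
      = ∏ x ∈ Finset.univ.image a, (X - C x) ^ p.rootMultiplicity x :=
        by rw [Finset.prod_image ha.injOn]
    _ = ∏ x ∈ p.roots.toFinset, (X - C x) ^ p.rootMultiplicity x := by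
        refine (Finset.prod_subset hsub fun x _ hx => ?_).symm
        rw [Multiset.mem_toFinset, ← Multiset.count_eq_zero, count_roots] at hx
        rw [hx, pow_zero]
    _ = p := by
        rw [← prod_multiset_root_eq_finset_root]
        exact (hs.eq_prod_roots_of_monic hp).symm

end Polynomials

section LocallyConstant

theorem isLocallyConstant_of_isClosed_fiber {T α : Type*} [TopologicalSpace T] {f : T → α}
    (hfin : (Set.range f).Finite) (hf : ∀ a, IsClosed (f ⁻¹' {a})) : IsLocallyConstant f := by
  intro s
  have hs : f ⁻¹' sᶜ = ⋃ a ∈ Set.range f ∩ sᶜ, f ⁻¹' {a} := by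
    ext t
    simp
  rw [← isClosed_compl_iff, ← Set.preimage_compl, hs]
  exact (hfin.inter_of_left _).isClosed_biUnion fun a _ => hf a

open Polynomial in
theorem rootMultiplicity_eq_of_continuous_eval {T K ι : Type*} [TopologicalSpace T]
    [PreconnectedSpace T] [Field K] [Infinite K] [TopologicalSpace K] [IsTopologicalRing K]
    [T2Space K] [Finite ι] {p : T → K[X]} {a : T → ι → K} {d : ℕ}
    (hp : ∀ x, Continuous fun t => (p t).eval x) (hmonic : ∀ t, (p t).Monic)
    (hsplits : ∀ t, (p t).Splits) (hdeg : ∀ t, (p t).natDegree ≤ d) (ha : Continuous a)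
    (hinj : ∀ t, Function.Injective (a t)) (hroots : ∀ t x, (p t).IsRoot x → x ∈ Set.range (a t))
    (s t : T) (i : ι) :
    (p s).rootMultiplicity (a s i) = (p t).rootMultiplicity (a t i) := by
  classical
  have := Fintype.ofFinite ι
  let mult : T → ι → ℕ := fun t i => (p t).rootMultiplicity (a t i)
  have hprod (t : T) : ∏ i, (X - C (a t i)) ^ mult t i = p t :=
    prod_X_sub_C_pow_rootMultiplicity (hmonic t) (hsplits t) (hinj t) (hroots t)
  have hfin : (Set.range mult).Finite := by
    refine (Set.finite_Iic fun _ : ι => d).subset ?_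
    rintro _ ⟨t, rfl⟩ i
    calc mult t i = (p t).roots.count (a t i) := (count_roots _).symm
      _ ≤ (p t).roots.card := Multiset.count_le_card _ _
      _ ≤ d := (card_roots' _).trans (hdeg t)
  -- The multiplicities are `q` exactly when `p t` is the corresponding product, and the latter is
  -- a closed condition because it can be tested on values.
  have hfiber (q : ι → ℕ) :
      mult ⁻¹' {q} = ⋂ x : K, {t | (p t).eval x = ∏ i, (x - a t i) ^ q i} := by
    ext t
    have heval (x : K) : (∏ i, (X - C (a t i)) ^ q i).eval x = ∏ i, (x - a t i) ^ q i := by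
      simp [eval_prod]
    simp only [Set.mem_iInter, Set.mem_ofPred_eq, ← heval]
    constructor
    · rintro rfl x
      rw [hprod]
    · intro h
      funext i
      rw [← rootMultiplicity_prod_X_sub_C_pow (hinj t) q i, ← Polynomial.funext h]
  have hclosed (q : ι → ℕ) : IsClosed (mult ⁻¹' {q}) := by
    rw [hfiber]
    exact isClosed_iInter fun x => isClosed_eq (hp x) (by fun_prop)
  exact congrFun
    ((isLocallyConstant_of_isClosed_fiber hfin hclosed).apply_eq_of_preconnectedSpace s t) i

theorem rootMultiplicity_charpoly_eq_of_continuous {T K ι κ : Type*} [TopologicalSpace T]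
    [PreconnectedSpace T] [Field K] [IsAlgClosed K] [TopologicalSpace K] [IsTopologicalRing K]
    [T2Space K] [Finite ι] [Fintype κ] [DecidableEq κ] {A : T → Matrix κ κ K} {a : T → ι → K}
    (hA : Continuous A) (ha : Continuous a) (hinj : ∀ t, Function.Injective (a t))
    (hsp : ∀ t, spectrum K (A t) ⊆ Set.range (a t)) (s t : T) (i : ι) :
    (A s).charpoly.rootMultiplicity (a s i) = (A t).charpoly.rootMultiplicity (a t i) := by
  refine rootMultiplicity_eq_of_continuous_eval (d := Fintype.card κ) (fun x => ?_)
    (fun t => (A t).charpoly_monic) (fun t => IsAlgClosed.splits _)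
    (fun t => (A t).charpoly_natDegree_eq_dim.le) ha hinj
    (fun t x hx => hsp t (mem_spectrum_iff_isRoot_charpoly.2 hx)) s t i
  simp only [eval_charpoly]
  exact (continuous_const.sub hA).matrix_det

end LocallyConstant

section Configurations

variable {ι : Type*} [Finite ι]

theorem finite_setOf_not_injective_lineMap {K : Type*} [Field K] (a : ι → K) {b : ι → K}
    (hb : Function.Injective b) :
    {z : K | ¬ Function.Injective (AffineMap.lineMap a b z : ι → K)}.Finite := by
  have hunion : {z : K | ¬ Function.Injective (AffineMap.lineMap a b z : ι → K)} ⊆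
      ⋃ (i : ι) (j : ι), {z | i ≠ j ∧
        AffineMap.lineMap (a i) (b i) z = AffineMap.lineMap (a j) (b j) z} := by
    intro z hz
    simp only [Set.mem_ofPred_eq, Function.Injective, not_forall] at hz
    obtain ⟨i, j, heq, hij⟩ := hz
    simp only [AffineMap.pi_lineMap_apply] at heq
    exact Set.mem_iUnion₂.2 ⟨i, j, hij, heq⟩
  refine (Set.finite_iUnion fun i => Set.finite_iUnion fun j => Set.Subsingleton.finite ?_).subset
    hunion
  rintro z ⟨hij, hz⟩ w ⟨-, hw⟩
  simp only [AffineMap.lineMap_apply_ring'] at hz hw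
  by_contra hzw
  have hslope : (b i - a i) - (b j - a j) = 0 :=
    (mul_eq_zero.1 (by linear_combination hz - hw)).resolve_left (sub_ne_zero.2 hzw)
  exact hij (hb (by linear_combination hz + (1 - z) * hslope))

theorem isPreconnected_setOf_injective : IsPreconnected {a : ι → ℂ | Function.Injective a} := by
  refine isPreconnected_of_forall_pair fun a ha b hb =>
    ⟨AffineMap.lineMap a b '' {z : ℂ | Function.Injective (AffineMap.lineMap a b z : ι → ℂ)},
      Set.image_subset_iff.2 fun z hz => hz, ⟨0, by simpa using ha⟩, ⟨1, by simpa using hb⟩, ?_⟩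
  refine IsPreconnected.image ?_ _ AffineMap.lineMap_continuous.continuousOn
  simpa [Set.compl_ofPred] using
    ((finite_setOf_not_injective_lineMap a hb).countable.isConnected_compl_of_one_lt_rank
      (by rw [Complex.rank_real_complex]; norm_num)).isPreconnected

theorem dense_setOf_injective (𝕜 : Type*) [NontriviallyNormedField 𝕜] [CompleteSpace 𝕜] :
    Dense {a : ι → 𝕜 | Function.Injective a} := by
  intro a
  obtain ⟨b, hb⟩ : ∃ b : ι → 𝕜, Function.Injective b :=
    have ⟨f, hf⟩ := exists_injective_nat ι
    ⟨_, (Infinite.natEmbedding 𝕜).injective.comp hf⟩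
  have hz : (0 : 𝕜) ∈ closure {z | ¬ Function.Injective (AffineMap.lineMap a b z : ι → 𝕜)}ᶜ :=
    (finite_setOf_not_injective_lineMap a hb).countable.dense_compl 𝕜 0
  simpa using map_mem_closure AffineMap.lineMap_continuous hz (t := {c | Function.Injective c})
    fun z hz => not_not.1 hz

end Configurations

section Unitary

theorem joined_one_of_isSelfAdjoint {A : Type*} [Ring A] [StarRing A] [Algebra ℂ A]
    [StarModule ℂ A] [TopologicalSpace A] [ContinuousAdd A] [ContinuousSMul ℂ A]
    {s : unitary A} (hs : IsSelfAdjoint (s : A)) : Joined 1 s := by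
  have hss : (s : A) * s = 1 := by
    simpa only [hs.star_eq] using Unitary.coe_star_mul_self s
  -- `(1 + s) / 2` and `(1 - s) / 2` are the spectral projections of `s`; rotate the eigenvalue
  -- of the second one along the unit circle, from `1` to `-1`.
  let w : ℂ → A := fun z => (1 / 2 : ℂ) • (1 + s : A) + (z / 2) • (1 - s : A)
  have hstar (z : ℂ) : star (w z) = w (star z) := by
    simp [w, hs.star_eq]
  have hmul {z : ℂ} (hz : star z * z = 1) : w (star z) * w z = 1 := by
    simp only [w, add_mul, mul_add, smul_mul_assoc, mul_smul_comm, sub_mul, mul_sub, one_mul,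
      mul_one, hss]
    match_scalars
    · linear_combination (1 / 2) * hz
    · linear_combination (-1 / 2) * hz
  have hunitary (z : Circle) : w z ∈ unitary A := by
    have hz : star (z : ℂ) * z = 1 := by
      rw [Complex.star_def, ← Complex.normSq_eq_conj_mul_self, Circle.normSq_coe,
        Complex.ofReal_one]
    refine Unitary.mem_iff.2 ⟨by rw [hstar, hmul hz], ?_⟩
    simpa only [hstar, star_star] using hmul (z := star (z : ℂ)) (by rwa [star_star, mul_comm])
  let γ : Circle → unitary A := fun z => ⟨w z, hunitary z⟩
  have hγ : Continuous γ := Continuous.subtype_mk (by fun_prop) _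
  have hγ1 : γ 1 = 1 := by
    ext
    simp only [γ, w, Circle.coe_one, OneMemClass.coe_one]
    module
  have hγs : γ (Circle.exp Real.pi) = s := by
    ext
    simp only [γ, w, Circle.coe_exp, Complex.exp_pi_mul_I]
    module
  exact ⟨⟨⟨fun t => γ (Circle.exp (t * Real.pi)), by fun_prop⟩, by simpa using hγ1,
    by simpa using hγs⟩⟩

variable {ι R : Type*} [Fintype ι] [DecidableEq ι]

theorem permMatrix_mem_unitaryGroup [CommRing R] [StarRing R] (σ : Equiv.Perm ι) :
    σ.permMatrix R ∈ unitaryGroup ι R := by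
  rw [mem_unitaryGroup_iff, star_eq_conjTranspose, conjTranspose_permMatrix, ← permMatrix_mul,
    inv_mul_cancel, permMatrix_one]

theorem permMatrix_mul_diagonal [NonAssocSemiring R] (σ : Equiv.Perm ι) (a : ι → R) :
    σ.permMatrix R * diagonal a = diagonal (a ∘ σ) * σ.permMatrix R := by
  ext i j
  rw [mul_diagonal, diagonal_mul, Equiv.Perm.permMatrix, PEquiv.toMatrix_apply]
  by_cases h : σ i = j <;> simp [Equiv.toPEquiv_apply, h]

end Unitary

section SpectralTheorem

theorem exists_orthonormalBasis_apply_eq_smul_of_commute {𝕜 E ι : Type*} [RCLike 𝕜]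
    [NormedAddCommGroup E] [InnerProductSpace 𝕜 E] [FiniteDimensional 𝕜 E] [Fintype ι]
    (hι : Module.finrank 𝕜 E = Fintype.card ι) {S T : E →ₗ[𝕜] E} (hS : S.IsSymmetric)
    (hT : T.IsSymmetric) (hST : Commute S T) :
    ∃ (b : OrthonormalBasis ι 𝕜 E) (μ ν : ι → 𝕜),
      ∀ i, S (b i) = μ i • b i ∧ T (b i) = ν i • b i := by
  classical
  let V : 𝕜 × 𝕜 → Submodule 𝕜 E := fun c =>
    Module.End.eigenspace S c.2 ⊓ Module.End.eigenspace T c.1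
  have hV : OrthogonalFamily 𝕜 (fun c => V c) fun c => (V c).subtypeₗᵢ :=
    hS.orthogonalFamily_eigenspace_inf_eigenspace hT
  have hinternal : DirectSum.IsInternal fun c : {c // V c ≠ ⊥} => V c :=
    DirectSum.isInternal_ne_bot_iff.2 (hS.directSum_isInternal_of_commute hT hST)
  have : Finite {c // V c ≠ ⊥} := WellFoundedGT.finite_ne_bot_of_iSupIndep hV.independent
  have := Fintype.ofFinite {c // V c ≠ ⊥}
  have hV' := hV.comp (Subtype.val_injective (p := fun c => V c ≠ ⊥))
  let e : Fin (Fintype.card ι) ≃ ι := (Fintype.equivFin ι).symm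
  let b := (hinternal.subordinateOrthonormalBasis hι hV').reindex e
  let c : ι → 𝕜 × 𝕜 := fun i => (hinternal.subordinateOrthonormalBasisIndex hι (e.symm i) hV').1
  have hb (i : ι) : b i ∈ V (c i) := by
    simpa only [b, OrthonormalBasis.reindex_apply] using
      hinternal.subordinateOrthonormalBasis_subordinate hι (e.symm i) hV'
  exact ⟨b, fun i => (c i).2, fun i => (c i).1, fun i =>
    ⟨Module.End.mem_eigenspace_iff.1 (hb i).1, Module.End.mem_eigenspace_iff.1 (hb i).2⟩⟩

open ComplexStarModule in
theorem exists_eq_conjStarAlgAut_diagonal {ι : Type*} [Fintype ι] [DecidableEq ι]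
    (A : Matrix ι ι ℂ) [IsStarNormal A] : ∃ (U : unitaryGroup ι ℂ) (a : ι → ℂ),
      A = Unitary.conjStarAlgAut ℂ _ U (diagonal a) := by
  let H : Matrix ι ι ℂ := ℜ A
  let K : Matrix ι ι ℂ := ℑ A
  have hH : (toEuclideanLin H).IsSymmetric := isSymmetric_toEuclideanLin_iff.2 (ℜ A).2
  have hK : (toEuclideanLin K).IsSymmetric := isSymmetric_toEuclideanLin_iff.2 (ℑ A).2
  have hHK : Commute (toEuclideanLin H) (toEuclideanLin K) :=
    (Commute.realPart_imaginaryPart A).map (toLpLinAlgEquiv (R := ℂ) (n := ι) 2)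
  obtain ⟨b, μ, ν, hb⟩ := exists_orthonormalBasis_apply_eq_smul_of_commute
    finrank_euclideanSpace hH hK hHK
  let a : ι → ℂ := fun i => μ i + Complex.I * ν i
  have hmulVec (i : ι) : A *ᵥ (b i).ofLp = a i • (b i).ofLp := by
    have hHb : H *ᵥ (b i).ofLp = μ i • (b i).ofLp := congrArg WithLp.ofLp (hb i).1
    have hKb : K *ᵥ (b i).ofLp = ν i • (b i).ofLp := congrArg WithLp.ofLp (hb i).2
    rw [← realPart_add_I_smul_imaginaryPart A, add_mulVec, smul_mulVec, hHb, hKb, add_smul,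
      mul_smul]
  let U : unitaryGroup ι ℂ := ⟨(EuclideanSpace.basisFun ι ℂ).toBasis.toMatrix b.toBasis,
    (EuclideanSpace.basisFun ι ℂ).toMatrix_orthonormalBasis_mem_unitary b⟩
  have hAU : A * U = U * diagonal a := by
    ext i j
    rw [mul_diagonal, mul_comm]
    exact congrFun (hmulVec j) i
  refine ⟨U, a, ?_⟩
  rw [Unitary.conjStarAlgAut_apply, ← hAU, mul_assoc, Unitary.mul_star_self_of_mem U.2, mul_one]

end SpectralTheorem

theorem nonempty_algHom_of_card_dvd_card (R : Type*) {ι κ : Type*} [CommSemiring R] [Fintype ι]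
    [Fintype κ] [DecidableEq ι] [DecidableEq κ] (h : Fintype.card ι ∣ Fintype.card κ) :
    Nonempty (Matrix ι ι R →ₐ[R] Matrix κ κ R) := by
  obtain ⟨p, hp⟩ := h
  have e : Fin p × ι ≃ κ := Fintype.equivOfCardEq (by simp [hp, mul_comm])
  exact ⟨((compAlgEquiv (Fin p) ι R R).trans (reindexAlgEquiv R R e)).toAlgHom.comp
    (scalarAlgHom (Fin p) R)⟩

theorem card_eq_card_mul_of_charpoly_eq_pow {R ι κ : Type*} [CommRing R] [Nontrivial R]
    [Fintype ι] [DecidableEq ι] [Fintype κ] [DecidableEq κ] {A : Matrix ι ι R}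
    {B : Matrix κ κ R} {p : ℕ} (h : B.charpoly = A.charpoly ^ p) :
    Fintype.card κ = Fintype.card ι * p := by
  rw [← B.charpoly_natDegree_eq_dim, h, A.charpoly_monic.natDegree_pow,
    A.charpoly_natDegree_eq_dim, mul_comm]

/-- The space of normal complex matrices with rows and columns indexed by `ι`, in the subspace
topology; this is `N_n` for `ι = Fin n`. -/
abbrev NormalMatrix (ι : Type*) [Fintype ι] : Type _ := {X : Matrix ι ι ℂ // X * Xᴴ = Xᴴ * X}

namespace NormalMatrix

variable {ι κ : Type*} [Fintype ι] [DecidableEq ι] [Fintype κ] [DecidableEq κ]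

/-- The normal matrix `U * diagonal a * Uᴴ`, with eigenvalues `a` on the columns of `U`. -/
noncomputable def conjDiagonal (U : unitaryGroup ι ℂ) (a : ι → ℂ) : NormalMatrix ι :=
  ⟨Unitary.conjStarAlgAut ℂ _ U (diagonal a), by
    rw [← star_eq_conjTranspose, ← map_star, ← map_mul, ← map_mul, star_eq_conjTranspose,
      diagonal_conjTranspose, (commute_diagonal _ _).eq]⟩

theorem coe_conjDiagonal (U : unitaryGroup ι ℂ) (a : ι → ℂ) :
    (conjDiagonal U a : Matrix ι ι ℂ) = U * diagonal a * star (U : Matrix ι ι ℂ) :=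
  Unitary.conjStarAlgAut_apply ..

theorem continuous_conjDiagonal {T : Type*} [TopologicalSpace T] {U : T → unitaryGroup ι ℂ}
    {a : T → ι → ℂ} (hU : Continuous U) (ha : Continuous a) :
    Continuous fun t => conjDiagonal (U t) (a t) := by
  refine Continuous.subtype_mk ?_ _
  simp only [Unitary.conjStarAlgAut_apply]
  fun_prop

theorem exists_eq_conjDiagonal (X : NormalMatrix ι) :
    ∃ (U : unitaryGroup ι ℂ) (a : ι → ℂ), X = conjDiagonal U a := by
  have : IsStarNormal (X : Matrix ι ι ℂ) := ⟨X.2.symm⟩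
  obtain ⟨U, a, h⟩ := exists_eq_conjStarAlgAut_diagonal (X : Matrix ι ι ℂ)
  exact ⟨U, a, Subtype.ext h⟩

theorem charpoly_conjDiagonal (U : unitaryGroup ι ℂ) (a : ι → ℂ) :
    (conjDiagonal U a : Matrix ι ι ℂ).charpoly = ∏ i, (Polynomial.X - Polynomial.C (a i)) := by
  rw [coe_conjDiagonal, charpoly_mul_comm, ← mul_assoc, Unitary.star_mul_self_of_mem U.2, one_mul,
    charpoly_diagonal]

theorem spectrum_conjDiagonal (U : unitaryGroup ι ℂ) (a : ι → ℂ) :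
    spectrum ℂ (conjDiagonal U a : Matrix ι ι ℂ) = Set.range a :=
  (AlgEquiv.spectrum_eq (Unitary.conjStarAlgAut ℂ _ U) (diagonal a)).trans (spectrum_diagonal a)

theorem conjDiagonal_mul_permMatrix (U : unitaryGroup ι ℂ) (σ : Equiv.Perm ι) (a : ι → ℂ) :
    conjDiagonal (U * ⟨σ.permMatrix ℂ, permMatrix_mem_unitaryGroup σ⟩) a =
      conjDiagonal U (a ∘ σ) := by
  have hσ : Unitary.conjStarAlgAut ℂ (Matrix ι ι ℂ)
      ⟨σ.permMatrix ℂ, permMatrix_mem_unitaryGroup σ⟩ (diagonal a) = diagonal (a ∘ σ) := by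
    rw [Unitary.conjStarAlgAut_apply, permMatrix_mul_diagonal, mul_assoc,
      Unitary.mul_star_self_of_mem (permMatrix_mem_unitaryGroup σ), mul_one]
  exact Subtype.ext ((Unitary.conjStarAlgAut_mul_apply ..).trans (congrArg _ hσ))

section SpectrumShrinking

variable {φ : NormalMatrix ι → Matrix κ κ ℂ} (hφ : Continuous φ)
  (hsp : ∀ X, spectrum ℂ (φ X) ⊆ spectrum ℂ X.val)

include hφ hsp

theorem rootMultiplicity_charpoly_eq_of_joined {U V : unitaryGroup ι ℂ} (hUV : Joined U V)
    {a : ι → ℂ} (ha : Function.Injective a) (i : ι) :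
    (φ (conjDiagonal U a)).charpoly.rootMultiplicity (a i) =
      (φ (conjDiagonal V a)).charpoly.rootMultiplicity (a i) := by
  obtain ⟨γ⟩ := hUV
  have hcont : Continuous fun t => φ (conjDiagonal (γ t) a) :=
    hφ.comp (continuous_conjDiagonal γ.continuous continuous_const)
  have h := rootMultiplicity_charpoly_eq_of_continuous (a := fun _ => a) hcont continuous_const
    (fun _ => ha) (fun t => (hsp _).trans_eq (spectrum_conjDiagonal (γ t) a)) 0 1 i
  rwa [γ.source, γ.target] at h

theorem rootMultiplicity_charpoly_eq_of_injective (U : unitaryGroup ι ℂ) {a b : ι → ℂ}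
    (ha : Function.Injective a) (hb : Function.Injective b) (i : ι) :
    (φ (conjDiagonal U a)).charpoly.rootMultiplicity (a i) =
      (φ (conjDiagonal U b)).charpoly.rootMultiplicity (b i) := by
  have : PreconnectedSpace {a : ι → ℂ | Function.Injective a} :=
    isPreconnected_iff_preconnectedSpace.1 isPreconnected_setOf_injective
  have hcont : Continuous fun c : {a : ι → ℂ | Function.Injective a} => φ (conjDiagonal U c) :=
    hφ.comp (continuous_conjDiagonal continuous_const continuous_subtype_val)
  exact rootMultiplicity_charpoly_eq_of_continuous hcont continuous_subtype_val (fun c => c.2)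
    (fun c => (hsp _).trans_eq (spectrum_conjDiagonal U _)) ⟨a, ha⟩ ⟨b, hb⟩ i

theorem rootMultiplicity_charpoly_eq (U : unitaryGroup ι ℂ) {a : ι → ℂ}
    (ha : Function.Injective a) (i j : ι) :
    (φ (conjDiagonal U a)).charpoly.rootMultiplicity (a i) =
      (φ (conjDiagonal U a)).charpoly.rootMultiplicity (a j) := by
  let σ := Equiv.swap i j
  let S : unitaryGroup ι ℂ := ⟨σ.permMatrix ℂ, permMatrix_mem_unitaryGroup σ⟩
  have hS : IsSelfAdjoint (S : Matrix ι ι ℂ) := by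
    rw [isSelfAdjoint_iff, star_eq_conjTranspose, conjTranspose_permMatrix, Equiv.swap_inv]
  have hUS : Joined U (U * S) := by
    simpa using (Joined.refl U).mul (joined_one_of_isSelfAdjoint hS)
  calc (φ (conjDiagonal U a)).charpoly.rootMultiplicity (a i)
      = (φ (conjDiagonal (U * S) a)).charpoly.rootMultiplicity (a i) :=
        rootMultiplicity_charpoly_eq_of_joined hφ hsp hUS ha i
    _ = (φ (conjDiagonal U (a ∘ σ))).charpoly.rootMultiplicity ((a ∘ σ) j) := by
        rw [conjDiagonal_mul_permMatrix, Function.comp_apply, Equiv.swap_apply_right]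
    _ = (φ (conjDiagonal U a)).charpoly.rootMultiplicity (a j) :=
        rootMultiplicity_charpoly_eq_of_injective hφ hsp U (ha.comp σ.injective) ha j

theorem exists_charpoly_eq_pow_of_injective (U : unitaryGroup ι ℂ) {a : ι → ℂ}
    (ha : Function.Injective a) :
    ∃ p : ℕ, (φ (conjDiagonal U a)).charpoly = (conjDiagonal U a).val.charpoly ^ p := by
  have hprod := prod_X_sub_C_pow_rootMultiplicity (φ (conjDiagonal U a)).charpoly_monic
    (IsAlgClosed.splits _) ha fun x hx => spectrum_conjDiagonal U a ▸
      hsp _ (mem_spectrum_iff_isRoot_charpoly.2 hx)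
  obtain ⟨p, hp⟩ : ∃ p, ∀ i, (φ (conjDiagonal U a)).charpoly.rootMultiplicity (a i) = p := by
    rcases isEmpty_or_nonempty ι with h | ⟨⟨i⟩⟩
    · exact ⟨0, h.elim⟩
    · exact ⟨_, fun j => rootMultiplicity_charpoly_eq hφ hsp U ha j i⟩
  simp only [hp] at hprod
  exact ⟨p, by rw [charpoly_conjDiagonal, ← Finset.prod_pow, hprod]⟩

theorem card_dvd_card : Fintype.card ι ∣ Fintype.card κ := by
  obtain ⟨a, ha⟩ := (dense_setOf_injective (ι := ι) ℂ).nonempty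
  obtain ⟨p, hp⟩ := exists_charpoly_eq_pow_of_injective hφ hsp 1 ha
  exact ⟨p, card_eq_card_mul_of_charpoly_eq_pow hp⟩

theorem charpoly_eq_pow (X : NormalMatrix ι) :
    (φ X).charpoly = X.val.charpoly ^ (Fintype.card κ / Fintype.card ι) := by
  obtain ⟨U, a, rfl⟩ := exists_eq_conjDiagonal X
  have hU : Continuous (conjDiagonal U) :=
    continuous_conjDiagonal continuous_const continuous_id
  refine Polynomial.funext fun x => ?_
  rw [Polynomial.eval_pow, eval_charpoly, eval_charpoly]
  revert a
  refine funext_iff.1 (Continuous.ext_on (dense_setOf_injective ℂ) ?_ ?_ fun a ha => ?_)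
  · exact (continuous_const.sub (hφ.comp hU)).matrix_det
  · exact (continuous_const.sub (continuous_subtype_val.comp hU)).matrix_det.pow _
  · obtain ⟨p, hp⟩ := exists_charpoly_eq_pow_of_injective hφ hsp U ha
    rw [← eval_charpoly, ← eval_charpoly, hp, Polynomial.eval_pow]
    rcases isEmpty_or_nonempty ι with h | h
    · simp
    · rw [card_eq_card_mul_of_charpoly_eq_pow hp, Nat.mul_div_cancel_left _ Fintype.card_pos]

theorem spectrum_eq [Nonempty κ] (X : NormalMatrix ι) : spectrum ℂ (φ X) = spectrum ℂ X.val := by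
  have hdvd := card_dvd_card hφ hsp
  have hcard : Fintype.card κ / Fintype.card ι ≠ 0 :=
    Nat.div_ne_zero_iff_of_dvd hdvd |>.2
      ⟨Fintype.card_ne_zero, ne_zero_of_dvd_ne_zero Fintype.card_ne_zero hdvd⟩
  ext x
  simp only [mem_spectrum_iff_isRoot_charpoly, Polynomial.IsRoot.def, charpoly_eq_pow hφ hsp,
    Polynomial.eval_pow, pow_eq_zero_iff hcard]

end SpectrumShrinking

theorem exists_continuous_spectrum_subset_of_card_dvd_card
    (h : Fintype.card ι ∣ Fintype.card κ) : ∃ φ : NormalMatrix ι → Matrix κ κ ℂ,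
      Continuous φ ∧ ∀ X, spectrum ℂ (φ X) ⊆ spectrum ℂ X.val := by
  obtain ⟨f⟩ := nonempty_algHom_of_card_dvd_card ℂ h
  exact ⟨fun X => f X.val,
    (LinearMap.continuous_of_finiteDimensional f.toLinearMap).comp continuous_subtype_val,
    fun X => AlgHom.spectrum_apply_subset f X.val⟩

end NormalMatrix

open NormalMatrix in
theorem exists_continuous_spectrum_shrinker_normal_iff_general (ι κ : Type*) [Fintype ι]
    [DecidableEq ι] [Fintype κ] [DecidableEq κ] [Nonempty κ] :
    ((∃ φ : NormalMatrix ι → Matrix κ κ ℂ,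
        Continuous φ ∧ ∀ X, spectrum ℂ (φ X) ⊆ spectrum ℂ X.val) ↔
      Fintype.card ι ∣ Fintype.card κ) ∧
    ∀ φ : NormalMatrix ι → Matrix κ κ ℂ,
      Continuous φ → (∀ X, spectrum ℂ (φ X) ⊆ spectrum ℂ X.val) →
      ∀ X, (φ X).charpoly = X.val.charpoly ^ (Fintype.card κ / Fintype.card ι) ∧
        spectrum ℂ (φ X) = spectrum ℂ X.val :=
  ⟨⟨fun ⟨_, hφ, hsp⟩ => card_dvd_card hφ hsp, exists_continuous_spectrum_subset_of_card_dvd_card⟩,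
    fun _ hφ hsp X => ⟨charpoly_eq_pow hφ hsp X, spectrum_eq hφ hsp X⟩⟩

/-- For integers `m, n ≥ 1`, there exists a continuous spectrum-shrinking
map `φ : N_n → M_m` (defined on the set of normal matrices) iff `n ∣ m`; and when `n ∣ m`,
every continuous spectrum-shrinking `φ : N_n → M_m` satisfies `k_{φ(X)} = (k_X)^(m/n)`
(in particular it preserves spectra). -/
theorem exists_continuous_spectrum_shrinker_normal_iff (n m : ℕ) (hn : 1 ≤ n) (hm : 1 ≤ m) :
    ((∃ φ : {X : Matrix (Fin n) (Fin n) ℂ //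
          X * X.conjTranspose = X.conjTranspose * X} → Matrix (Fin m) (Fin m) ℂ,
        Continuous φ ∧ ∀ X, spectrum ℂ (φ X) ⊆ spectrum ℂ X.val) ↔ n ∣ m) ∧
    (n ∣ m → ∀ φ : {X : Matrix (Fin n) (Fin n) ℂ //
          X * X.conjTranspose = X.conjTranspose * X} → Matrix (Fin m) (Fin m) ℂ,
        Continuous φ → (∀ X, spectrum ℂ (φ X) ⊆ spectrum ℂ X.val) →
        ∀ X, (φ X).charpoly = X.val.charpoly ^ (m / n) ∧
          spectrum ℂ (φ X) = spectrum ℂ X.val) := by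
  have : Nonempty (Fin m) := ⟨⟨0, hm⟩⟩
  simpa only [Fintype.card_fin] using
    (exists_continuous_spectrum_shrinker_normal_iff_general (Fin n) (Fin m)).imp_right fun h _ => h
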